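/- arXiv:2404.15453 — 3 statements merged into one kernel-verified Lean document; each statement's English description precedes it below -/
import Mathlib

section
/- For all constants c₁, c₂, c₃, c₄ > 0 there exists λ₀ > 0 (depending only on c₁, c₂, c₃, c₄) with the following property. Let V be a finite-dimensional real inner product space, L : V → V a semi-negative linear map, P : V → V an orthogonal projection (self-adjoint and idempotent), h > 0, τ > 0, and λ = τ/h ≤ λ₀. Assume for all w, v ∈ V: (H2) ‖P L w‖ ≤ c₁ h^{−1/2} |w|_Γ and ‖P L* w‖ ≤ c₁ h^{−1/2} |w|_Γ; (H3) |v|_Γ ≤ c₂ h^{−1/2} ‖v‖; (H4) ‖L v‖ ≤ c₃ h^{−1} ‖v‖; and (H5) τ⁴‖L² w‖² ≤ c₄ (τ λ³ |w|_Γ² + τ³ λ |L w|_Γ²). Then the operator R̃₂ = I + τL + (τ²/2) L (I − P) L satisfies ‖R̃₂ w‖ ≤ ‖w‖ for all w ∈ V. -/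
open RealInnerProductSpace

/-- The jump seminorm `|v|_Γ = (-⟪(L + L*)v, v⟫)^{1/2}` associated with a
semi-negative operator `L` with adjoint `L*`. -/
noncomputable def jumpSN {V : Type*} [NormedAddCommGroup V] [InnerProductSpace ℝ V]
    (L Lstar : V →ₗ[ℝ] V) (v : V) : ℝ :=
  Real.sqrt (-⟪(L + Lstar) v, v⟫)

/-!
With `a = L w`, adjointness gives `2 ⟪L w, w⟫ = -|w|_Γ²`, `2 ⟪L a, a⟫ = -|a|_Γ²` and
`‖a‖² + ⟪L a, w⟫ = -[w, a]_Γ`, where `[·, ·]_Γ` is the positive semidefinite form whose seminorm is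
`|·|_Γ`. Hence, up to the terms containing `P` and the fourth-order term, `‖R̃₂ w‖² - ‖w‖²` is at
most `-τ (x² - x y + y² / 2)` by Cauchy-Schwarz, where `x = |w|_Γ` and `y = τ |a|_Γ`, and this is
negative definite. In the terms containing `P` the projection can be moved onto both factors, since
`⟪L (P a), v⟫ = ⟪P a, P (L* v)⟫`, so (H2) makes them `O(τ λ (x² + y²))`; (H2), (H4) and (H5) do the
same for the fourth-order term. For small `λ` the negative definite form absorbs them all.
-/

section JumpForm

variable {V : Type*} [NormedAddCommGroup V] [InnerProductSpace ℝ V] {L Lstar : V →ₗ[ℝ] V}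

/-- The bilinear form `[u, v]_Γ = -⟪(L + L*) u, v⟫`, whose associated seminorm is
`jumpSN L Lstar`. -/
noncomputable def jumpForm (L Lstar : V →ₗ[ℝ] V) : LinearMap.BilinForm ℝ V :=
  -(innerₗ V ∘ₗ (L + Lstar))

lemma jumpForm_apply (u v : V) : jumpForm L Lstar u v = -⟪(L + Lstar) u, v⟫ := rfl

lemma jumpForm_eq_of_adjoint (hadj : ∀ w v : V, ⟪L w, v⟫ = ⟪w, Lstar v⟫) (u v : V) :
    jumpForm L Lstar u v = -(⟪L u, v⟫ + ⟪L v, u⟫) := by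
  rw [jumpForm_apply, LinearMap.add_apply, inner_add_left, hadj v u, real_inner_comm v (Lstar u)]

lemma jumpForm_isSymm (hadj : ∀ w v : V, ⟪L w, v⟫ = ⟪w, Lstar v⟫) :
    LinearMap.IsSymm (jumpForm L Lstar) :=
  ⟨fun u v ↦ by
    rw [RingHom.id_apply, jumpForm_eq_of_adjoint hadj, jumpForm_eq_of_adjoint hadj, add_comm]⟩

lemma jumpSN_nonneg (v : V) : 0 ≤ jumpSN L Lstar v := Real.sqrt_nonneg _

lemma jumpForm_self_nonneg (hneg : ∀ v : V, ⟪(L + Lstar) v, v⟫ ≤ 0) (v : V) :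
    0 ≤ jumpForm L Lstar v v :=
  neg_nonneg.2 (hneg v)

lemma jumpSN_sq (hneg : ∀ v : V, ⟪(L + Lstar) v, v⟫ ≤ 0) (v : V) :
    jumpSN L Lstar v ^ 2 = jumpForm L Lstar v v :=
  Real.sq_sqrt (jumpForm_self_nonneg hneg v)

lemma abs_jumpForm_le (hadj : ∀ w v : V, ⟪L w, v⟫ = ⟪w, Lstar v⟫)
    (hneg : ∀ v : V, ⟪(L + Lstar) v, v⟫ ≤ 0) (u v : V) :
    |jumpForm L Lstar u v| ≤ jumpSN L Lstar u * jumpSN L Lstar v := by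
  refine abs_le_of_sq_le_sq ?_ (mul_nonneg (jumpSN_nonneg u) (jumpSN_nonneg v))
  rw [mul_pow, jumpSN_sq hneg, jumpSN_sq hneg]
  exact LinearMap.BilinForm.apply_sq_le_of_symm _ (jumpForm_self_nonneg hneg)
    (jumpForm_isSymm hadj) u v

lemma two_mul_inner_map_self (hadj : ∀ w v : V, ⟪L w, v⟫ = ⟪w, Lstar v⟫)
    (hneg : ∀ v : V, ⟪(L + Lstar) v, v⟫ ≤ 0) (v : V) :
    2 * ⟪L v, v⟫ = -jumpSN L Lstar v ^ 2 := by
  rw [jumpSN_sq hneg, jumpForm_eq_of_adjoint hadj]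
  ring

lemma norm_map_sq_add_inner_map_map_le (hadj : ∀ w v : V, ⟪L w, v⟫ = ⟪w, Lstar v⟫)
    (hneg : ∀ v : V, ⟪(L + Lstar) v, v⟫ ≤ 0) (w : V) :
    ‖L w‖ ^ 2 + ⟪L (L w), w⟫ ≤ jumpSN L Lstar w * jumpSN L Lstar (L w) :=
  calc ‖L w‖ ^ 2 + ⟪L (L w), w⟫ = -jumpForm L Lstar w (L w) := by
        rw [jumpForm_eq_of_adjoint hadj, real_inner_self_eq_norm_sq, neg_neg]
    _ ≤ |jumpForm L Lstar w (L w)| := neg_le_abs _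
    _ ≤ jumpSN L Lstar w * jumpSN L Lstar (L w) := abs_jumpForm_le hadj hneg w (L w)

end JumpForm

section Energy

variable {V : Type*} [NormedAddCommGroup V] [InnerProductSpace ℝ V] {L Lstar P : V →ₗ[ℝ] V}

/-- One step `R̃₂ w = w + τ L w + (τ² / 2) L (I - P) L w` of the sdA-RK2DG1 scheme. -/
noncomputable def sdARK2Step (L P : V →ₗ[ℝ] V) (τ : ℝ) (w : V) : V :=
  w + τ • L w + (τ ^ 2 / 2) • L (L w - P (L w))

lemma norm_add_smul_add_smul_sq (w a z : V) (s t : ℝ) :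
    ‖w + s • a + t • z‖ ^ 2 = ‖w‖ ^ 2 + s ^ 2 * ‖a‖ ^ 2 + t ^ 2 * ‖z‖ ^ 2
      + 2 * s * ⟪a, w⟫ + 2 * t * ⟪z, w⟫ + 2 * s * t * ⟪z, a⟫ := by
  rw [norm_add_sq_real, norm_add_sq_real, inner_add_left]
  simp only [real_inner_smul_left, real_inner_smul_right, norm_smul, mul_pow, Real.norm_eq_abs,
    sq_abs]
  rw [real_inner_comm a w, real_inner_comm z w, real_inner_comm z a]
  ring

lemma norm_sdARK2Step_sq (τ : ℝ) (w : V) :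
    ‖sdARK2Step L P τ w‖ ^ 2 = ‖w‖ ^ 2 + τ * (2 * ⟪L w, w⟫)
      + τ ^ 2 * (‖L w‖ ^ 2 + ⟪L (L w), w⟫) + τ ^ 3 / 2 * (2 * ⟪L (L w), L w⟫)
      - τ ^ 2 * ⟪L (P (L w)), w⟫ - τ ^ 3 * ⟪L (P (L w)), L w⟫
      + τ ^ 4 / 4 * ‖L (L w) - L (P (L w))‖ ^ 2 := by
  rw [sdARK2Step, norm_add_smul_add_smul_sq, map_sub, inner_sub_left, inner_sub_left]
  ring

lemma abs_inner_map_proj_le (hadj : ∀ w v : V, ⟪L w, v⟫ = ⟪w, Lstar v⟫)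
    (hP : P.IsSymmetricProjection) (u v : V) :
    |⟪L (P u), v⟫| ≤ ‖P u‖ * ‖P (Lstar v)‖ := by
  have hPP : P (P u) = P u := LinearMap.congr_fun hP.isIdempotentElem u
  have hinner : ⟪L (P u), v⟫ = ⟪P u, P (Lstar v)⟫ := by rw [hadj, ← hP.isSymmetric, hPP]
  exact hinner ▸ abs_real_inner_le_norm _ _

lemma norm_sdARK2Step_sq_le (hadj : ∀ w v : V, ⟪L w, v⟫ = ⟪w, Lstar v⟫)
    (hneg : ∀ v : V, ⟪(L + Lstar) v, v⟫ ≤ 0) (hP : P.IsSymmetricProjection)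
    {τ : ℝ} (hτ : 0 ≤ τ) (w : V) :
    ‖sdARK2Step L P τ w‖ ^ 2 ≤ ‖w‖ ^ 2 - τ * jumpSN L Lstar w ^ 2
      + τ ^ 2 * (jumpSN L Lstar w * jumpSN L Lstar (L w)) - τ ^ 3 / 2 * jumpSN L Lstar (L w) ^ 2
      + τ ^ 2 * (‖P (L w)‖ * ‖P (Lstar w)‖) + τ ^ 3 * (‖P (L w)‖ * ‖P (Lstar (L w))‖)
      + τ ^ 4 / 2 * (‖L (L w)‖ ^ 2 + ‖L (P (L w))‖ ^ 2) := by
  have hcross := norm_map_sq_add_inner_map_map_le hadj hneg w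
  have hproj (v : V) : -⟪L (P (L w)), v⟫ ≤ ‖P (L w)‖ * ‖P (Lstar v)‖ :=
    (neg_le_abs _).trans (abs_inner_map_proj_le hadj hP (L w) v)
  have hfourth : ‖L (L w) - L (P (L w))‖ ^ 2 ≤ 2 * (‖L (L w)‖ ^ 2 + ‖L (P (L w))‖ ^ 2) :=
    (pow_le_pow_left₀ (norm_nonneg _) (norm_sub_le _ _) 2).trans add_sq_le
  rw [norm_sdARK2Step_sq, two_mul_inner_map_self hadj hneg, two_mul_inner_map_self hadj hneg]
  linarith [mul_le_mul_of_nonneg_left hcross (pow_nonneg hτ 2),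
    mul_le_mul_of_nonneg_left (hproj w) (pow_nonneg hτ 2),
    mul_le_mul_of_nonneg_left (hproj (L w)) (pow_nonneg hτ 3),
    mul_le_mul_of_nonneg_left hfourth (by positivity : 0 ≤ τ ^ 4 / 4)]

end Energy

section InverseEstimates

variable {V : Type*} [NormedAddCommGroup V] [InnerProductSpace ℝ V] {L Lstar P : V →ₗ[ℝ] V}
  {c₁ c₃ h : ℝ}

lemma rpow_neg_half_sq (hh : 0 ≤ h) : (h ^ (-(1 / 2) : ℝ)) ^ 2 = h⁻¹ := by
  rw [← Real.rpow_mul_natCast hh, ← Real.rpow_neg_one]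
  norm_num

lemma norm_proj_mul_norm_proj_adjoint_le (hh : 0 ≤ h)
    (hPL : ∀ w : V, ‖P (L w)‖ ≤ c₁ * h ^ (-(1 / 2) : ℝ) * jumpSN L Lstar w)
    (hPLstar : ∀ w : V, ‖P (Lstar w)‖ ≤ c₁ * h ^ (-(1 / 2) : ℝ) * jumpSN L Lstar w) (u v : V) :
    ‖P (L u)‖ * ‖P (Lstar v)‖ ≤ h⁻¹ * (c₁ ^ 2 * (jumpSN L Lstar u * jumpSN L Lstar v)) :=
  calc ‖P (L u)‖ * ‖P (Lstar v)‖
      ≤ (c₁ * h ^ (-(1 / 2) : ℝ) * jumpSN L Lstar u)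
          * (c₁ * h ^ (-(1 / 2) : ℝ) * jumpSN L Lstar v) :=
        mul_le_mul (hPL u) (hPLstar v) (norm_nonneg _) ((norm_nonneg _).trans (hPL u))
    _ = (h ^ (-(1 / 2) : ℝ)) ^ 2 * (c₁ ^ 2 * (jumpSN L Lstar u * jumpSN L Lstar v)) := by ring
    _ = h⁻¹ * (c₁ ^ 2 * (jumpSN L Lstar u * jumpSN L Lstar v)) := by rw [rpow_neg_half_sq hh]

lemma norm_map_proj_map_sq_le (hh : 0 ≤ h)
    (hPL : ∀ w : V, ‖P (L w)‖ ≤ c₁ * h ^ (-(1 / 2) : ℝ) * jumpSN L Lstar w)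
    (hL : ∀ v : V, ‖L v‖ ≤ c₃ * h⁻¹ * ‖v‖) (w : V) :
    ‖L (P (L w))‖ ^ 2 ≤ h⁻¹ ^ 3 * (c₁ ^ 2 * c₃ ^ 2 * jumpSN L Lstar w ^ 2) :=
  calc ‖L (P (L w))‖ ^ 2 ≤ (c₃ * h⁻¹ * ‖P (L w)‖) ^ 2 :=
        pow_le_pow_left₀ (norm_nonneg _) (hL _) 2
    _ = (c₃ * h⁻¹) ^ 2 * ‖P (L w)‖ ^ 2 := mul_pow _ _ _
    _ ≤ (c₃ * h⁻¹) ^ 2 * (c₁ * h ^ (-(1 / 2) : ℝ) * jumpSN L Lstar w) ^ 2 := by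
        gcongr
        exact hPL w
    _ = h⁻¹ ^ 2 * (h ^ (-(1 / 2) : ℝ)) ^ 2 * (c₁ ^ 2 * c₃ ^ 2 * jumpSN L Lstar w ^ 2) := by ring
    _ = h⁻¹ ^ 3 * (c₁ ^ 2 * c₃ ^ 2 * jumpSN L Lstar w ^ 2) := by
        rw [rpow_neg_half_sq hh, ← pow_succ]

end InverseEstimates

section Absorption

variable {c₁ c₃ c₄ lam : ℝ}

/-- The bound `λ₀` on the CFL number `λ = τ / h`, in terms of the constants of (H2), (H4), (H5).
It is at most `1`, and small enough for the perturbations of size `λ` to be absorbed. -/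
noncomputable def cflBound (c₁ c₃ c₄ : ℝ) : ℝ :=
  (1 + 3 * (3 * c₁ ^ 2 + c₄ + c₁ ^ 2 * c₃ ^ 2))⁻¹

lemma cflBound_pos (hc₄ : 0 ≤ c₄) : 0 < cflBound c₁ c₃ c₄ := by
  unfold cflBound
  positivity

lemma cflBound_le_one (hc₄ : 0 ≤ c₄) : cflBound c₁ c₃ c₄ ≤ 1 :=
  inv_le_one_of_one_le₀ (le_add_of_nonneg_right (by positivity))

lemma mul_le_third_of_le_cflBound (hc₄ : 0 ≤ c₄) (hlam : 0 ≤ lam)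
    (hcfl : lam ≤ cflBound c₁ c₃ c₄) :
    lam * (3 * c₁ ^ 2 + c₄ + c₁ ^ 2 * c₃ ^ 2) ≤ 1 / 3 := by
  have := (le_inv_mul_iff₀ (by positivity)).1 (hcfl.trans_eq (mul_one _).symm)
  linarith

lemma sq_add_sq_div_six_le (x y : ℝ) : (x ^ 2 + y ^ 2) / 6 ≤ x ^ 2 - x * y + y ^ 2 / 2 := by
  linarith [sq_nonneg (5 * x - 3 * y), sq_nonneg y]

lemma perturbation_le (hc₄ : 0 ≤ c₄) (hlam : 0 ≤ lam) (hlam_one : lam ≤ 1) (x y : ℝ) :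
    lam * c₁ ^ 2 * (x ^ 2 + x * y) + c₄ / 2 * (lam ^ 3 * x ^ 2 + lam * y ^ 2)
        + lam ^ 3 / 2 * (c₁ ^ 2 * c₃ ^ 2 * x ^ 2)
      ≤ lam * (3 * c₁ ^ 2 + c₄ + c₁ ^ 2 * c₃ ^ 2) * ((x ^ 2 + y ^ 2) / 2) := by
  have hcube : lam ^ 3 ≤ lam := pow_le_of_le_one hlam hlam_one three_ne_zero
  have hquad : x ^ 2 + x * y ≤ 3 / 2 * (x ^ 2 + y ^ 2) := by
    linarith [two_mul_le_add_sq x y, sq_nonneg y]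
  calc lam * c₁ ^ 2 * (x ^ 2 + x * y) + c₄ / 2 * (lam ^ 3 * x ^ 2 + lam * y ^ 2)
        + lam ^ 3 / 2 * (c₁ ^ 2 * c₃ ^ 2 * x ^ 2)
      ≤ lam * c₁ ^ 2 * (3 / 2 * (x ^ 2 + y ^ 2)) + c₄ / 2 * (lam * x ^ 2 + lam * y ^ 2)
        + lam / 2 * (c₁ ^ 2 * c₃ ^ 2 * (x ^ 2 + y ^ 2)) := by
        gcongr
        exact le_add_of_nonneg_right (sq_nonneg y)
    _ = lam * (3 * c₁ ^ 2 + c₄ + c₁ ^ 2 * c₃ ^ 2) * ((x ^ 2 + y ^ 2) / 2) := by ring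

lemma perturbation_le_quadratic_form (hc₄ : 0 ≤ c₄) (hlam : 0 ≤ lam)
    (hcfl : lam ≤ cflBound c₁ c₃ c₄) (x y : ℝ) :
    lam * c₁ ^ 2 * (x ^ 2 + x * y) + c₄ / 2 * (lam ^ 3 * x ^ 2 + lam * y ^ 2)
        + lam ^ 3 / 2 * (c₁ ^ 2 * c₃ ^ 2 * x ^ 2)
      ≤ x ^ 2 - x * y + y ^ 2 / 2 :=
  calc _ ≤ lam * (3 * c₁ ^ 2 + c₄ + c₁ ^ 2 * c₃ ^ 2) * ((x ^ 2 + y ^ 2) / 2) :=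
        perturbation_le hc₄ hlam (hcfl.trans (cflBound_le_one hc₄)) x y
    _ ≤ 1 / 3 * ((x ^ 2 + y ^ 2) / 2) :=
        mul_le_mul_of_nonneg_right (mul_le_third_of_le_cflBound hc₄ hlam hcfl) (by positivity)
    _ = (x ^ 2 + y ^ 2) / 6 := by ring
    _ ≤ x ^ 2 - x * y + y ^ 2 / 2 := sq_add_sq_div_six_le x y

end Absorption

theorem sdA_rk2dg1_monotonicity_stability_general {V : Type*} [NormedAddCommGroup V]
    [InnerProductSpace ℝ V] {L Lstar P : V →ₗ[ℝ] V} {c₁ c₃ c₄ h τ : ℝ}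
    (hadj : ∀ w v : V, ⟪L w, v⟫ = ⟪w, Lstar v⟫)
    (hneg : ∀ v : V, ⟪(L + Lstar) v, v⟫ ≤ 0)
    (hP : P.IsSymmetricProjection)
    (hc₄ : 0 ≤ c₄) (hh : 0 < h) (hτ : 0 ≤ τ) (hcfl : τ / h ≤ cflBound c₁ c₃ c₄)
    (hPL : ∀ w : V, ‖P (L w)‖ ≤ c₁ * h ^ (-(1 / 2) : ℝ) * jumpSN L Lstar w)
    (hPLstar : ∀ w : V, ‖P (Lstar w)‖ ≤ c₁ * h ^ (-(1 / 2) : ℝ) * jumpSN L Lstar w)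
    (hL : ∀ v : V, ‖L v‖ ≤ c₃ * h⁻¹ * ‖v‖)
    (hLL : ∀ w : V, τ ^ 4 * ‖L (L w)‖ ^ 2
        ≤ c₄ * (τ * (τ / h) ^ 3 * (jumpSN L Lstar w) ^ 2
          + τ ^ 3 * (τ / h) * (jumpSN L Lstar (L w)) ^ 2))
    (w : V) : ‖sdARK2Step L P τ w‖ ≤ ‖w‖ := by
  refine (sq_le_sq₀ (norm_nonneg _) (norm_nonneg w)).1 ?_
  have henergy := norm_sdARK2Step_sq_le hadj hneg hP hτ w
  have hproj (v : V) := norm_proj_mul_norm_proj_adjoint_le hh.le hPL hPLstar w v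
  have hLPL := norm_map_proj_map_sq_le hh.le hPL hL w
  have hLLw := hLL w
  have habsorb := perturbation_le_quadratic_form hc₄ (div_nonneg hτ hh.le) hcfl
    (jumpSN L Lstar w) (τ * jumpSN L Lstar (L w))
  rw [div_eq_mul_inv] at hLLw habsorb
  set x := jumpSN L Lstar w
  set y := jumpSN L Lstar (L w)
  calc ‖sdARK2Step L P τ w‖ ^ 2
      ≤ ‖w‖ ^ 2 - τ * (x ^ 2 - x * (τ * y) + (τ * y) ^ 2 / 2)
          + τ * ((τ * h⁻¹) * c₁ ^ 2 * (x ^ 2 + x * (τ * y))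
            + c₄ / 2 * ((τ * h⁻¹) ^ 3 * x ^ 2 + (τ * h⁻¹) * (τ * y) ^ 2)
            + (τ * h⁻¹) ^ 3 / 2 * (c₁ ^ 2 * c₃ ^ 2 * x ^ 2)) := by
        linarith [mul_le_mul_of_nonneg_left (hproj w) (pow_nonneg hτ 2),
          mul_le_mul_of_nonneg_left (hproj (L w)) (pow_nonneg hτ 3),
          mul_le_mul_of_nonneg_left hLPL (by positivity : 0 ≤ τ ^ 4 / 2)]
    _ ≤ ‖w‖ ^ 2 := by linarith [mul_le_mul_of_nonneg_left habsorb hτ]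

/-- Monotonicity stability of the sdA-RK2DG1 scheme (Theorem 3.1): under
hypotheses (H2)-(H5), for `λ = τ/h ≤ λ₀` the operator
`R̃₂ = I + τL + (τ²/2)L(I - P)L` satisfies `‖R̃₂ w‖ ≤ ‖w‖`. -/
theorem sdA_rk2dg1_monotonicity_stability :
    ∀ c₁ c₂ c₃ c₄ : ℝ, 0 < c₁ → 0 < c₂ → 0 < c₃ → 0 < c₄ →
    ∃ lam₀ > (0 : ℝ),
      ∀ (V : Type) [NormedAddCommGroup V] [InnerProductSpace ℝ V] [FiniteDimensional ℝ V],
      ∀ L Lstar P : V →ₗ[ℝ] V,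
        (∀ w v : V, ⟪L w, v⟫ = ⟪w, Lstar v⟫) →
        (∀ v : V, ⟪(L + Lstar) v, v⟫ ≤ 0) →
        (∀ w v : V, ⟪P w, v⟫ = ⟪w, P v⟫) →
        (∀ v : V, P (P v) = P v) →
        ∀ h τ : ℝ, 0 < h → 0 < τ → τ / h ≤ lam₀ →
        (∀ w : V, ‖P (L w)‖ ≤ c₁ * h ^ (-(1 / 2) : ℝ) * jumpSN L Lstar w) →
        (∀ w : V, ‖P (Lstar w)‖ ≤ c₁ * h ^ (-(1 / 2) : ℝ) * jumpSN L Lstar w) →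
        (∀ v : V, jumpSN L Lstar v ≤ c₂ * h ^ (-(1 / 2) : ℝ) * ‖v‖) →
        (∀ v : V, ‖L v‖ ≤ c₃ * h⁻¹ * ‖v‖) →
        (∀ w : V, τ ^ 4 * ‖L (L w)‖ ^ 2
            ≤ c₄ * (τ * (τ / h) ^ 3 * (jumpSN L Lstar w) ^ 2
              + τ ^ 3 * (τ / h) * (jumpSN L Lstar (L w)) ^ 2)) →
        ∀ w : V, ‖w + τ • L w + (τ ^ 2 / 2) • L (L w - P (L w))‖ ≤ ‖w‖ := by
  intro c₁ c₂ c₃ c₄ _ _ _ hc₄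
  refine ⟨cflBound c₁ c₃ c₄, cflBound_pos hc₄.le, ?_⟩
  intro V _ _ _ L Lstar P hadj hneg hPsymm hPidem h τ hh hτ hcfl hPL hPLstar _ hL hLL w
  exact sdA_rk2dg1_monotonicity_stability_general hadj hneg ⟨LinearMap.ext hPidem, hPsymm⟩ hc₄.le
    hh hτ.le hcfl hPL hPLstar hL hLL w
end

section
/- For all constants c₁, c₂, c₃ > 0 and every integer vector \underline{i} = (i₁, …, i_m) with m ≥ 2 and all entries ≥ 1, there exists C > 0 (depending only on c₁, c₂, c₃ and \underline{i}) with the following property. Let V be a real inner product space, L : V → V a semi-negative linear map with adjoint L*, P : V → V an orthogonal projection, and h > 0, such that for all w, v ∈ V: ‖P L w‖ ≤ c₁ h^{−1/2} |w|_Γ, ‖P L* w‖ ≤ c₁ h^{−1/2} |w|_Γ, |v|_Γ ≤ c₂ h^{−1/2} ‖v‖, and ‖L v‖ ≤ c₃ h^{−1} ‖v‖. Writing |\underline{i}| = i₁ + ⋯ + i_m and L^{\underline{i}} = L^{i₁} P L^{i₂} P ⋯ P L^{i_m}, one has for all w ∈ V: ‖L^{\underline{i}} w‖ ≤ C h^{−|\underline{i}|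 + i_m − 1/2} |L^{i_m − 1} w|_Γ. -/
open RealInnerProductSpace

/-- Alternating composition `L^{i₁} P L^{i₂} P ⋯ P L^{i_m}` associated with an
integer vector `(i₁, …, i_m)`. -/
def altComp {V : Type*} [AddCommGroup V] [Module ℝ V]
    (L P : V →ₗ[ℝ] V) : List ℕ → (V →ₗ[ℝ] V)
  | [] => 1
  | [i] => L ^ i
  | i :: rest => L ^ i * P * altComp L P rest

/-!
Split off the last exponent as `i_m = n + 1`, so that the innermost part of `L^{iv} w` is
`P (L (L ^ n w))`. The seminorm estimates this single factor `P L`, at the cost of `h^{-1/2}`. To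
its left, every factor `L` costs `c₃ h⁻¹` and every factor `P` is a contraction.
-/

section AltComp

variable {V : Type*} [AddCommGroup V] [Module ℝ V]

theorem altComp_cons (L P : V →ₗ[ℝ] V) (i : ℕ) {l : List ℕ} (hl : l ≠ []) :
    altComp L P (i :: l) = L ^ i * P * altComp L P l := by
  cases l with
  | nil => contradiction
  | cons j l => rfl

theorem altComp_append (L P : V →ₗ[ℝ] V) {l₁ l₂ : List ℕ} (h₁ : l₁ ≠ []) (h₂ : l₂ ≠ []) :
    altComp L P (l₁ ++ l₂) = altComp L P l₁ * P * altComp L P l₂ := by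
  induction l₁ with
  | nil => contradiction
  | cons i l ih =>
    rcases eq_or_ne l [] with rfl | hl
    · exact altComp_cons L P i h₂
    · rw [List.cons_append, altComp_cons L P i (List.append_ne_nil_of_left_ne_nil hl l₂), ih hl,
        altComp_cons L P i hl]
      simp only [mul_assoc]

end AltComp

theorem norm_iterate_le {V : Type*} [Norm V] {f : V → V} {a : ℝ} (ha : 0 ≤ a)
    (hf : ∀ v, ‖f v‖ ≤ a * ‖v‖) (n : ℕ) (v : V) : ‖f^[n] v‖ ≤ a ^ n * ‖v‖ := by
  induction n with
  | zero => simp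
  | succ n ih =>
    calc ‖f^[n + 1] v‖ = ‖f (f^[n] v)‖ := by rw [Function.iterate_succ_apply']
      _ ≤ a * ‖f^[n] v‖ := hf _
      _ ≤ a * (a ^ n * ‖v‖) := by gcongr
      _ = a ^ (n + 1) * ‖v‖ := by ring

theorem norm_apply_le_of_isSymmetricProjection {𝕜 V : Type*} [RCLike 𝕜] [NormedAddCommGroup V]
    [InnerProductSpace 𝕜 V] {P : V →ₗ[𝕜] V} (hP : P.IsSymmetricProjection) (v : V) :
    ‖P v‖ ≤ ‖v‖ := by
  obtain ⟨_, hP_eq⟩ := LinearMap.isSymmetricProjection_iff_eq_coe_starProjection_range.1 hP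
  rw [hP_eq]
  exact Submodule.norm_starProjection_apply_le _ v

section Bounds

variable {V : Type*} [SeminormedAddCommGroup V] [NormedSpace ℝ V] {L P : V →ₗ[ℝ] V}

theorem norm_altComp_le {a : ℝ} (ha : 0 ≤ a) (hL : ∀ v, ‖L v‖ ≤ a * ‖v‖)
    (hP : ∀ v, ‖P v‖ ≤ ‖v‖) (l : List ℕ) (v : V) :
    ‖altComp L P l v‖ ≤ a ^ l.sum * ‖v‖ := by
  have hpow (i : ℕ) (u : V) : ‖(L ^ i) u‖ ≤ a ^ i * ‖u‖ := by
    rw [Module.End.pow_apply]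
    exact norm_iterate_le ha hL i u
  induction l with
  | nil => simp [altComp]
  | cons i l ih =>
    rcases eq_or_ne l [] with rfl | hl
    · simpa [altComp] using hpow i v
    · calc ‖altComp L P (i :: l) v‖ = ‖(L ^ i) (P (altComp L P l v))‖ := by
            rw [altComp_cons L P i hl, Module.End.mul_apply, Module.End.mul_apply]
        _ ≤ a ^ i * ‖P (altComp L P l v)‖ := hpow i _
        _ ≤ a ^ i * (a ^ l.sum * ‖v‖) := by gcongr; exact (hP _).trans ih
        _ = a ^ (i :: l).sum * ‖v‖ := by rw [List.sum_cons, pow_add, mul_assoc]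

theorem norm_altComp_append_singleton_succ_le {a : ℝ} (ha : 0 ≤ a) (hL : ∀ v, ‖L v‖ ≤ a * ‖v‖)
    (hP : ∀ v, ‖P v‖ ≤ ‖v‖) {l : List ℕ} (hl : l ≠ []) (n : ℕ) (w : V) :
    ‖altComp L P (l ++ [n + 1]) w‖ ≤ a ^ l.sum * ‖P (L ((L ^ n) w))‖ := by
  have hsplit : altComp L P (l ++ [n + 1]) w = altComp L P l (P (L ((L ^ n) w))) := by
    simp only [altComp_append L P hl (List.cons_ne_nil _ _), altComp, pow_succ',
      Module.End.mul_apply]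
  rw [hsplit]
  exact norm_altComp_le ha hL hP l _

theorem norm_altComp_bound_general {c₁ c₃ h : ℝ} (hc₃ : 0 ≤ c₃) (hh : 0 < h) {J : V → ℝ}
    (hPL : ∀ w, ‖P (L w)‖ ≤ c₁ * h ^ (-(1 / 2) : ℝ) * J w)
    (hL : ∀ v, ‖L v‖ ≤ c₃ * h⁻¹ * ‖v‖) (hP : ∀ v, ‖P v‖ ≤ ‖v‖)
    {iv : List ℕ} (hlen : 2 ≤ iv.length) (hlast : ∀ i ∈ iv.getLast?, 1 ≤ i) (w : V) :
    ‖altComp L P iv w‖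
      ≤ c₁ * c₃ ^ iv.dropLast.sum * h ^ (-(iv.sum : ℝ) + (iv.getLastD 0 : ℝ) - 1 / 2)
          * J ((L ^ (iv.getLastD 0 - 1)) w) := by
  obtain ⟨l, n, hl, rfl⟩ : ∃ l n, l ≠ [] ∧ iv = l ++ [n + 1] := by
    obtain rfl | ⟨l, i, rfl⟩ := iv.eq_nil_or_concat'
    · simp at hlen
    · have hi : 1 ≤ i := hlast i List.getLast?_concat
      refine ⟨l, i - 1, ?_, by rw [Nat.sub_add_cancel hi]⟩
      rintro rfl
      simp at hlen
  have hexp : h ^ (-((l ++ [n + 1]).sum : ℝ) + (n + 1 : ℕ) - 1 / 2)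
      = h⁻¹ ^ l.sum * h ^ (-(1 / 2) : ℝ) := by
    rw [inv_pow, ← Real.rpow_natCast, ← Real.rpow_neg hh.le, ← Real.rpow_add hh, List.sum_append,
      List.sum_singleton]
    push_cast
    ring_nf
  rw [List.getLastD_concat, List.dropLast_concat, Nat.add_sub_cancel, hexp]
  calc ‖altComp L P (l ++ [n + 1]) w‖
      ≤ (c₃ * h⁻¹) ^ l.sum * ‖P (L ((L ^ n) w))‖ :=
        norm_altComp_append_singleton_succ_le (by positivity) hL hP hl n w
    _ ≤ (c₃ * h⁻¹) ^ l.sum * (c₁ * h ^ (-(1 / 2) : ℝ) * J ((L ^ n) w)) := by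
        gcongr
        exact hPL _
    _ = c₁ * c₃ ^ l.sum * (h⁻¹ ^ l.sum * h ^ (-(1 / 2) : ℝ)) * J ((L ^ n) w) := by ring

end Bounds

/-- Lemma 3.12: for an integer vector `iv = (i₁,…,i_m)` with `m ≥ 2` and positive
entries, `‖L^{iv} w‖ ≤ C h^{-|iv|+i_m-1/2} |L^{i_m-1} w|_Γ`. -/
theorem norm_altComp_bound :
    ∀ c₁ c₂ c₃ : ℝ, 0 < c₁ → 0 < c₂ → 0 < c₃ →
    ∀ iv : List ℕ, 2 ≤ iv.length → (∀ x ∈ iv, 1 ≤ x) →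
    ∃ C > (0 : ℝ),
      ∀ (V : Type) [NormedAddCommGroup V] [InnerProductSpace ℝ V],
      ∀ L Lstar P : V →ₗ[ℝ] V,
        (∀ w v : V, ⟪L w, v⟫ = ⟪w, Lstar v⟫) →
        (∀ v : V, ⟪(L + Lstar) v, v⟫ ≤ 0) →
        (∀ w v : V, ⟪P w, v⟫ = ⟪w, P v⟫) →
        (∀ v : V, P (P v) = P v) →
        ∀ h : ℝ, 0 < h →
        (∀ w : V, ‖P (L w)‖ ≤ c₁ * h ^ (-(1 / 2) : ℝ) * jumpSN L Lstar w) →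
        (∀ w : V, ‖P (Lstar w)‖ ≤ c₁ * h ^ (-(1 / 2) : ℝ) * jumpSN L Lstar w) →
        (∀ v : V, jumpSN L Lstar v ≤ c₂ * h ^ (-(1 / 2) : ℝ) * ‖v‖) →
        (∀ v : V, ‖L v‖ ≤ c₃ * h⁻¹ * ‖v‖) →
        ∀ w : V,
          ‖altComp L P iv w‖
            ≤ C * h ^ (-(iv.sum : ℝ) + (iv.getLastD 0 : ℝ) - 1 / 2)
                * jumpSN L Lstar ((L ^ (iv.getLastD 0 - 1)) w) := by
  intro c₁ _ c₃ hc₁ _ hc₃ iv hlen hpos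
  exact ⟨c₁ * c₃ ^ iv.dropLast.sum, by positivity,
    fun V _ _ L Lstar P _ _ hsymm hidem h hh hPL _ _ hL ↦
      norm_altComp_bound_general hc₃.le hh hPL hL
        (norm_apply_le_of_isSymmetricProjection ⟨LinearMap.ext hidem, hsymm⟩) hlen
        fun i hi ↦ hpos i (List.mem_of_mem_getLast? hi)⟩
end

section
/- Let r ≥ 3 be an integer with r ≡ 3 (mod 4). There exists a constant μ₀ > 0, depending only on r, with the following property: for every finite-dimensional real inner product space V, every semi-negative linear map L : V → V, and every τ > 0 with τ‖L‖ ≤ μ₀, the operator R = Σ_{i=0}^r (1/i!)(τL)^i satisfies ‖R w‖ ≤ ‖w‖ for all w ∈ V. -/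
open RealInnerProductSpace

/-!
Write `A = τL` and let `u(t) = ∑_{i ≤ r} (t ^ i / i!) A ^ i w` be the Taylor curve joining `w` to
`R w`. It solves the perturbed equation `u' = A u - (t ^ r / r!) A ^ (r + 1) w`, so with the
dissipation form `B(x, y) = -(⟪A x, y⟫ + ⟪x, A y⟫) ≥ 0`
  `d/dt ‖u‖ ^ 2 = -B(u, u) - 2 (t ^ r / r!) ⟪A ^ (r + 1) w, u⟫`,
and it is enough to bound `⟪A ^ (r + 1) w, u(t)⟫` below by `-E / 2`, where `E = ∫₀¹ B(u, u)`.
Put `r + 1 = 2k`. Moving `k` factors of `A` across the inner product turns `⟪A ^ (2k) w, w⟫` into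
`(-1) ^ k ‖A ^ k w‖ ^ 2`, which is a positive contribution because `k` is even; the other terms of
`u` contribute only `O(‖A‖) ‖A ^ k w‖ ^ 2`. The errors made in moving the factors are values
`B(A ^ i w, A ^ j w)` with `j < k ≤ i`, and Young's inequality splits them into a small multiple of
`B(A ^ j w, A ^ j w)`, bounded by a multiple of `E` because all norms on polynomials of bounded
degree are equivalent, and a multiple of `B(A ^ i w, A ^ i w) ≤ 2 ‖A‖ ‖A ^ k w‖ ^ 2`.
-/

section BilinForm

theorem exists_mem_forall_mem_bilinForm_apply_eq {K M : Type*} [Field K] [AddCommGroup M]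
    [Module K M] (B : LinearMap.BilinForm K M) (hB : ∀ x, B x x = 0 → x = 0)
    (W : Submodule K M) [FiniteDimensional K W] (φ : M →ₗ[K] K) :
    ∃ q ∈ W, ∀ p ∈ W, B q p = φ p := by
  have hinj : Function.Injective (B.restrict W) := by
    refine (injective_iff_map_eq_zero _).2 fun q hq => Subtype.ext (hB q ?_)
    simpa using LinearMap.congr_fun hq q
  obtain ⟨q, hq⟩ := (LinearMap.injective_iff_surjective_of_finrank_eq_finrank
    Subspace.dual_finrank_eq.symm).1 hinj (φ.domRestrict W)
  exact ⟨q, q.2, fun p hp => LinearMap.congr_fun hq ⟨p, hp⟩⟩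

theorem two_mul_abs_bilinForm_apply_le {V : Type*} [AddCommGroup V] [Module ℝ V]
    {B : LinearMap.BilinForm ℝ V} (hB : B.IsPosSemidef) {θ : ℝ} (hθ : 0 < θ) (x y : V) :
    2 * |B x y| ≤ θ * B x x + θ⁻¹ * B y y := by
  have hsymm : B y x = B x y := hB.isSymm.eq y x
  have hadd := hB.isNonneg.nonneg (θ • x + y)
  have hsub := hB.isNonneg.nonneg (θ • x - y)
  simp only [map_add, map_sub, map_smul, LinearMap.add_apply, LinearMap.sub_apply,
    LinearMap.smul_apply, smul_eq_mul, hsymm] at hadd hsub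
  have hscaled : θ * (2 * |B x y|) ≤ θ * (θ * B x x + θ⁻¹ * B y y) := by
    rw [mul_add, mul_inv_cancel_left₀ hθ.ne']
    rcases abs_cases (B x y) with ⟨h, _⟩ | ⟨h, _⟩ <;> rw [h] <;> linarith
  exact le_of_mul_le_mul_left hscaled hθ

end BilinForm

section PolynomialL2

open Polynomial

/-- The `L²` pairing of real polynomials on the interval from `a` to `b`. It represents the
coefficient functionals on polynomials of bounded degree. -/
noncomputable def polynomialL2Form (a b : ℝ) : LinearMap.BilinForm ℝ ℝ[X] :=
  LinearMap.mk₂ ℝ (fun p q => ∫ t in a..b, p.eval t * q.eval t)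
    (fun p p' q => by
      simp only [eval_add, add_mul]
      exact intervalIntegral.integral_add (Continuous.intervalIntegrable (by fun_prop) _ _)
        (Continuous.intervalIntegrable (by fun_prop) _ _))
    (fun c p q => by simp [mul_assoc])
    (fun p q q' => by
      simp only [eval_add, mul_add]
      exact intervalIntegral.integral_add (Continuous.intervalIntegrable (by fun_prop) _ _)
        (Continuous.intervalIntegrable (by fun_prop) _ _))
    (fun c p q => by simp [mul_left_comm])

theorem polynomialL2Form_apply (a b : ℝ) (p q : ℝ[X]) :
    polynomialL2Form a b p q = ∫ t in a..b, p.eval t * q.eval t := rfl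

theorem eq_zero_of_polynomialL2Form_self_eq_zero {a b : ℝ} (hab : a < b) {p : ℝ[X]}
    (hp : polynomialL2Form a b p p = 0) : p = 0 := by
  have hroot : ∀ t ∈ Set.Icc a b, p.IsRoot t := by
    by_contra! ⟨t, ht, hpt⟩
    refine (intervalIntegral.integral_pos (f := fun t => p.eval t * p.eval t) hab (by fun_prop)
      (fun t _ => mul_self_nonneg _) ⟨t, ht, mul_self_pos.2 hpt⟩).ne' hp
  exact p.eq_zero_of_infinite_isRoot ((Set.Icc_infinite hab).mono hroot)

end PolynomialL2

section TaylorSum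

open Polynomial

/-- The Taylor polynomial `∑_{i < n} (t ^ i / i!) • v i`, whose derivatives at `0` are the
`v i` with `i < n`. -/
noncomputable def taylorSum {E : Type*} [AddCommGroup E] [Module ℝ E] (v : ℕ → E) (n : ℕ) (t : ℝ) :
    E :=
  ∑ i ∈ Finset.range n, (t ^ i / (i.factorial : ℝ)) • v i

theorem taylorSum_succ {E : Type*} [AddCommGroup E] [Module ℝ E] (v : ℕ → E) (n : ℕ) (t : ℝ) :
    taylorSum v (n + 1) t = taylorSum v n t + (t ^ n / (n.factorial : ℝ)) • v n :=
  Finset.sum_range_succ _ n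

theorem taylorSum_succ_zero {E : Type*} [AddCommGroup E] [Module ℝ E] (v : ℕ → E) (n : ℕ) :
    taylorSum v (n + 1) 0 = v 0 := by
  simp [taylorSum, Finset.sum_range_succ']

theorem pow_div_factorial_le_one {t : ℝ} (ht : t ∈ Set.Icc (0 : ℝ) 1) (n : ℕ) :
    t ^ n / (n.factorial : ℝ) ≤ 1 :=
  div_le_one_of_le₀ ((pow_le_one₀ ht.1 ht.2).trans (by exact_mod_cast n.factorial_pos))
    (Nat.cast_nonneg _)

theorem map_taylorSum {E F : Type*} [AddCommGroup E] [Module ℝ E] [AddCommGroup F] [Module ℝ F]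
    (f : E →ₗ[ℝ] F) (v : ℕ → E) (n : ℕ) (t : ℝ) :
    f (taylorSum v n t) = taylorSum (fun i => f (v i)) n t := by
  simp [taylorSum]

@[fun_prop]
theorem continuous_taylorSum {E : Type*} [AddCommGroup E] [Module ℝ E] [TopologicalSpace E]
    [ContinuousAdd E] [ContinuousSMul ℝ E] (v : ℕ → E) (n : ℕ) : Continuous (taylorSum v n) := by
  unfold taylorSum
  fun_prop

theorem continuous_bilinForm_taylorSum {E : Type*} [AddCommGroup E] [Module ℝ E]
    (B : LinearMap.BilinForm ℝ E) (v : ℕ → E) (n : ℕ) :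
    Continuous fun t => B (taylorSum v n t) (taylorSum v n t) := by
  have hexpand : ∀ t, B (taylorSum v n t) (taylorSum v n t)
      = ∑ i ∈ Finset.range n,
        t ^ i / (i.factorial : ℝ) * taylorSum (fun j => B (v i) (v j)) n t := fun t => by
    rw [map_taylorSum B v, taylorSum, LinearMap.sum_apply]
    simp only [LinearMap.smul_apply, smul_eq_mul, map_taylorSum]
  simp only [hexpand]
  fun_prop

theorem hasDerivAt_taylorSum {E : Type*} [NormedAddCommGroup E] [NormedSpace ℝ E] (v : ℕ → E)
    (n : ℕ) (t : ℝ) :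
    HasDerivAt (taylorSum v (n + 1)) (taylorSum (fun i => v (i + 1)) n t) t := by
  induction n with
  | zero =>
    have hconst : taylorSum v 1 = fun _ => v 0 := by ext; simp [taylorSum]
    simpa [hconst, taylorSum] using hasDerivAt_const t (v 0)
  | succ n ih =>
    have hcoeff : HasDerivAt (fun s : ℝ => s ^ (n + 1) / ((n + 1).factorial : ℝ))
        (t ^ n / (n.factorial : ℝ)) t := by
      refine ((hasDerivAt_pow (n + 1) t).div_const ((n + 1).factorial : ℝ)).congr_deriv ?_
      rw [Nat.factorial_succ, Nat.add_sub_cancel]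
      push_cast
      field_simp
    have hsplit : taylorSum v (n + 1 + 1)
        = taylorSum v (n + 1) + fun s => (s ^ (n + 1) / ((n + 1).factorial : ℝ)) • v (n + 1) :=
      funext fun s => taylorSum_succ v (n + 1) s
    rw [hsplit, taylorSum_succ]
    exact ih.add (hcoeff.smul_const (v (n + 1)))

theorem exists_integral_mul_taylorSum_eq {a b : ℝ} (hab : a < b) {i n : ℕ} (hi : i < n) :
    ∃ q : ℝ[X], ∀ c : ℕ → ℝ, ∫ t in a..b, q.eval t * taylorSum c n t = c i := by
  obtain ⟨q, -, hq⟩ := exists_mem_forall_mem_bilinForm_apply_eq (polynomialL2Form a b)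
    (fun p => eq_zero_of_polynomialL2Form_self_eq_zero hab) (degreeLT ℝ n)
    ((i.factorial : ℝ) • lcoeff ℝ i)
  refine ⟨q, fun c => ?_⟩
  let p : ℝ[X] := ∑ j ∈ Finset.range n, monomial j (c j / (j.factorial : ℝ))
  have hp : p ∈ degreeLT ℝ n := Submodule.sum_mem _ fun j hj => mem_degreeLT.2
    ((degree_monomial_le _ _).trans_lt (by exact_mod_cast Finset.mem_range.1 hj))
  have hpeval : ∀ t, p.eval t = taylorSum c n t := fun t => by
    simp only [p, taylorSum, eval_finsetSum, eval_monomial, smul_eq_mul]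
    exact Finset.sum_congr rfl fun j _ => by ring
  have hcoeff : p.coeff i = c i / (i.factorial : ℝ) := by
    simp [p, finsetSum_coeff, coeff_monomial, hi.not_ge]
  simp only [← hpeval, ← polynomialL2Form_apply, hq p hp, LinearMap.smul_apply, lcoeff_apply,
    hcoeff, smul_eq_mul]
  field_simp

universe u

theorem exists_bilinForm_self_le_integral_taylorSum {a b : ℝ} (hab : a < b) {i n : ℕ}
    (hi : i < n) :
    ∃ C : ℝ, 0 < C ∧ ∀ {V : Type u} [AddCommGroup V] [Module ℝ V] {B : LinearMap.BilinForm ℝ V},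
      B.IsPosSemidef → ∀ v : ℕ → V,
        B (v i) (v i) ≤ C * ∫ t in a..b, B (taylorSum v n t) (taylorSum v n t) := by
  obtain ⟨q, hq⟩ := exists_integral_mul_taylorSum_eq hab hi
  set Q : ℝ := ∫ t in a..b, q.eval t ^ 2
  have hQ0 : 0 ≤ Q := intervalIntegral.integral_nonneg hab.le fun t _ => sq_nonneg _
  refine ⟨1 + Q, by positivity, fun {V} _ _ {B} hB v => ?_⟩
  set β := B (v i) (v i)
  set E := ∫ t in a..b, B (taylorSum v n t) (taylorSum v n t)
  have hβ : ∫ t in a..b, q.eval t * B (v i) (taylorSum v n t) = β := by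
    simp only [map_taylorSum]
    exact hq fun j => B (v i) (v j)
  have hyoung : ∀ t, 2 * (q.eval t * B (v i) (taylorSum v n t))
      ≤ (1 + Q)⁻¹ * β * q.eval t ^ 2 + (1 + Q) * B (taylorSum v n t) (taylorSum v n t) :=
    fun t => by
      have h := two_mul_abs_bilinForm_apply_le hB (by positivity : 0 < (1 + Q)⁻¹)
        (q.eval t • v i) (taylorSum v n t)
      simp only [map_smul, LinearMap.smul_apply, smul_eq_mul, inv_inv] at h
      linarith [le_abs_self (q.eval t * B (v i) (taylorSum v n t))]
  have hf : Continuous fun t => q.eval t * B (v i) (taylorSum v n t) := by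
    simp only [map_taylorSum]
    fun_prop
  have hg : Continuous fun t => (1 + Q)⁻¹ * β * q.eval t ^ 2 := by fun_prop
  have hh := (continuous_bilinForm_taylorSum B v n).const_mul (1 + Q)
  have hint : 2 * β ≤ (1 + Q)⁻¹ * β * Q + (1 + Q) * E := by
    have h := intervalIntegral.integral_mono_on (μ := MeasureTheory.volume) hab.le
      ((hf.const_mul 2).intervalIntegrable a b)
      ((hg.fun_add hh).intervalIntegrable a b) fun t _ => hyoung t
    rwa [intervalIntegral.integral_add (hg.intervalIntegrable a b) (hh.intervalIntegrable a b),
      intervalIntegral.integral_const_mul, intervalIntegral.integral_const_mul,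
      intervalIntegral.integral_const_mul, hβ] at h
  have hβQ : (1 + Q)⁻¹ * β * Q ≤ β := by
    rw [inv_mul_eq_div, div_mul_eq_mul_div, div_le_iff₀ (by positivity)]
    nlinarith [hB.isNonneg.nonneg (v i)]
  linarith

theorem exists_forall_bilinForm_self_le_integral_taylorSum {a b : ℝ} (hab : a < b) (n : ℕ) :
    ∃ C : ℝ, 0 < C ∧ ∀ {V : Type u} [AddCommGroup V] [Module ℝ V] {B : LinearMap.BilinForm ℝ V},
      B.IsPosSemidef → ∀ v : ℕ → V, ∀ i < n,
        B (v i) (v i) ≤ C * ∫ t in a..b, B (taylorSum v n t) (taylorSum v n t) := by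
  choose! C hCpos hC using fun (i : ℕ) (hi : i < n) =>
    exists_bilinForm_self_le_integral_taylorSum.{u} hab hi
  refine ⟨1 + ∑ i ∈ Finset.range n, C i, add_pos_of_pos_of_nonneg one_pos
    (Finset.sum_nonneg fun i hi => (hCpos i (Finset.mem_range.1 hi)).le),
    fun hB v i hi => (hC i hi hB v).trans ?_⟩
  gcongr
  · exact intervalIntegral.integral_nonneg hab.le fun t _ => hB.isNonneg.nonneg _
  · have := Finset.single_le_sum (fun j hj => (hCpos j (Finset.mem_range.1 hj)).le)
      (Finset.mem_range.2 hi)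
    linarith

end TaylorSum

section Dissipation

variable {V : Type*} [NormedAddCommGroup V] [InnerProductSpace ℝ V] (A : V →L[ℝ] V)

/-- The form `-(⟪A x, y⟫ + ⟪x, A y⟫)`: on the diagonal it is the rate at which the flow
`u' = A u` dissipates `‖u‖ ^ 2`, off the diagonal it is the defect of skew-adjointness of `A`. -/
noncomputable def dissipationForm : LinearMap.BilinForm ℝ V :=
  -((innerₗ V).comp A.toLinearMap + (innerₗ V).compl₂ A.toLinearMap)

theorem dissipationForm_apply (x y : V) :
    dissipationForm A x y = -(⟪A x, y⟫ + ⟪x, A y⟫) := by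
  simp [dissipationForm]

theorem dissipationForm_self (x : V) : dissipationForm A x x = -2 * ⟪A x, x⟫ := by
  rw [dissipationForm_apply, real_inner_comm (A x) x]
  ring

theorem isPosSemidef_dissipationForm {A : V →L[ℝ] V} (hA : ∀ v, ⟪A v, v⟫ ≤ 0) :
    (dissipationForm A).IsPosSemidef where
  eq x y := by
    simp only [dissipationForm_apply, real_inner_comm y (A x), real_inner_comm (A y) x, add_comm]
  nonneg x := by
    rw [dissipationForm_self]
    linarith [hA x]

theorem dissipationForm_self_le (x : V) : dissipationForm A x x ≤ 2 * (‖A‖ * ‖x‖ ^ 2) := by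
  have hinner : |⟪A x, x⟫| ≤ ‖A‖ * ‖x‖ ^ 2 := calc
    |⟪A x, x⟫| ≤ ‖A x‖ * ‖x‖ := abs_real_inner_le_norm _ _
    _ ≤ ‖A‖ * ‖x‖ * ‖x‖ := by gcongr; exact A.le_opNorm x
    _ = ‖A‖ * ‖x‖ ^ 2 := by ring
  rw [dissipationForm_self]
  linarith [neg_abs_le ⟪A x, x⟫]

theorem pow_add_apply (m n : ℕ) (x : V) : (A ^ (m + n)) x = (A ^ m) ((A ^ n) x) := by
  rw [pow_add]
  rfl

theorem abs_inner_pow_sub_neg_one_pow_mul_inner_pow_le {δ : ℝ} {n : ℕ} {x y : V}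
    (hδ : ∀ i j, i + j + 1 = n → |dissipationForm A ((A ^ i) x) ((A ^ j) y)| ≤ δ) :
    |⟪(A ^ n) x, y⟫ - (-1) ^ n * ⟪x, (A ^ n) y⟫| ≤ n * δ := by
  induction n generalizing y with
  | zero => simp
  | succ n ih =>
    have hlast : |dissipationForm A ((A ^ n) x) y| ≤ δ := hδ n 0 rfl
    have hrest := ih (y := A y) fun i j hij => by
      simpa only [pow_succ] using! hδ i (j + 1) (by omega)
    have hsplit : ⟪(A ^ (n + 1)) x, y⟫ - (-1) ^ (n + 1) * ⟪x, (A ^ (n + 1)) y⟫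
        = -(⟪(A ^ n) x, A y⟫ - (-1) ^ n * ⟪x, (A ^ n) (A y)⟫)
          - dissipationForm A ((A ^ n) x) y := by
      have hx : (A ^ (n + 1)) x = A ((A ^ n) x) := by rw [pow_succ']; rfl
      have hy : (A ^ (n + 1)) y = (A ^ n) (A y) := by rw [pow_succ]; rfl
      rw [dissipationForm_apply, hx, hy]
      ring
    rw [hsplit, Nat.cast_succ]
    refine (abs_sub _ _).trans ?_
    rw [abs_neg]
    linarith

variable {A}

theorem norm_pow_apply_le (hA : ‖A‖ ≤ 1) (n : ℕ) (x : V) : ‖(A ^ n) x‖ ≤ ‖x‖ := by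
  induction n with
  | zero => simp
  | succ n ih => calc
      ‖(A ^ (n + 1)) x‖ = ‖A ((A ^ n) x)‖ := by rw [pow_succ']; rfl
      _ ≤ 1 * ‖x‖ := A.le_of_opNorm_le_of_le hA ih
      _ = ‖x‖ := one_mul _

theorem norm_pow_succ_apply_le (hA : ‖A‖ ≤ 1) (n : ℕ) (x : V) :
    ‖(A ^ (n + 1)) x‖ ≤ ‖A‖ * ‖x‖ := calc
  ‖(A ^ (n + 1)) x‖ = ‖(A ^ n) (A x)‖ := by rw [pow_succ]; rfl
  _ ≤ ‖A x‖ := norm_pow_apply_le hA n (A x)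
  _ ≤ ‖A‖ * ‖x‖ := A.le_opNorm x

theorem abs_inner_pow_succ_pow_le (hA : ‖A‖ ≤ 1) (m n : ℕ) (x : V) :
    |⟪(A ^ (m + 1)) x, (A ^ n) x⟫| ≤ ‖A‖ * ‖x‖ ^ 2 := calc
  |⟪(A ^ (m + 1)) x, (A ^ n) x⟫| ≤ ‖(A ^ (m + 1)) x‖ * ‖(A ^ n) x‖ := abs_real_inner_le_norm _ _
  _ ≤ ‖A‖ * ‖x‖ * ‖x‖ := by
    gcongr
    · exact norm_pow_succ_apply_le hA m x
    · exact norm_pow_apply_le hA n x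
  _ = ‖A‖ * ‖x‖ ^ 2 := by ring

theorem abs_dissipationForm_pow_apply_le (hA : ‖A‖ ≤ 1) (hneg : ∀ v, ⟪A v, v⟫ ≤ 0) {M θ : ℝ}
    (hθ : 0 < θ) {x y : V} (hy : dissipationForm A y y ≤ M) (i : ℕ) :
    |dissipationForm A ((A ^ i) x) y| ≤ θ * M / 2 + θ⁻¹ * (‖A‖ * ‖x‖ ^ 2) := by
  have hyoung := two_mul_abs_bilinForm_apply_le (isPosSemidef_dissipationForm hneg)
    (inv_pos.2 hθ) ((A ^ i) x) y
  have hx : dissipationForm A ((A ^ i) x) ((A ^ i) x) ≤ 2 * (‖A‖ * ‖x‖ ^ 2) :=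
    (dissipationForm_self_le A _).trans (by gcongr; exact norm_pow_apply_le hA i x)
  have hx' := mul_le_mul_of_nonneg_left hx (inv_pos.2 hθ).le
  have hy' := mul_le_mul_of_nonneg_left hy hθ.le
  rw [inv_inv] at hyoung
  linarith

section HalfwayPower

variable {k : ℕ} {δ : ℝ} {w : V}

theorem norm_sq_sub_le_inner_pow_add_self (hk : Even k)
    (hδ : ∀ i, ∀ j < k, |dissipationForm A ((A ^ i) ((A ^ k) w)) ((A ^ j) w)| ≤ δ) :
    ‖(A ^ k) w‖ ^ 2 - k * δ ≤ ⟪(A ^ (k + k)) w, w⟫ := by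
  have h := abs_inner_pow_sub_neg_one_pow_mul_inner_pow_le A (n := k) (x := (A ^ k) w) (y := w)
    fun i j hij => hδ i j (by omega)
  rw [hk.neg_one_pow, one_mul, real_inner_self_eq_norm_sq, ← pow_add_apply A k k w] at h
  linarith [(abs_le.1 h).1]

theorem abs_inner_pow_add_self_pow_succ_le (hA : ‖A‖ ≤ 1) (hδ0 : 0 ≤ δ)
    (hδ : ∀ i, ∀ j < k, |dissipationForm A ((A ^ i) ((A ^ k) w)) ((A ^ j) w)| ≤ δ) (j : ℕ) :
    |⟪(A ^ (k + k)) w, (A ^ (j + 1)) w⟫| ≤ ‖A‖ * ‖(A ^ k) w‖ ^ 2 + k * δ := by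
  rcases lt_or_ge j k with hj | hj
  · obtain ⟨n, hn⟩ := Nat.exists_eq_add_of_le' (show j + 1 ≤ k from hj)
    set z := (A ^ k) w with hz_def
    have hmove := abs_inner_pow_sub_neg_one_pow_mul_inner_pow_le A (n := n)
      (x := (A ^ (j + 1)) z) (y := (A ^ (j + 1)) w) (δ := δ) fun i m him => by
        rw [← pow_add_apply A i (j + 1) z, ← pow_add_apply A m (j + 1) w]
        exact hδ (i + (j + 1)) (m + (j + 1)) (by omega)
    rw [← pow_add_apply A n (j + 1) z, ← pow_add_apply A n (j + 1) w, ← hn, ← hz_def] at hmove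
    have hz : |⟪(A ^ (j + 1)) z, z⟫| ≤ ‖A‖ * ‖z‖ ^ 2 := abs_inner_pow_succ_pow_le hA j 0 z
    have hsign : |(-1) ^ n * ⟪(A ^ (j + 1)) z, z⟫| = |⟪(A ^ (j + 1)) z, z⟫| := by
      rw [abs_mul, abs_neg_one_pow, one_mul]
    have hnδ : (n : ℝ) * δ ≤ k * δ := by gcongr; omega
    rw [pow_add_apply A k k w]
    linarith [abs_sub_abs_le_abs_sub ⟪(A ^ k) z, (A ^ (j + 1)) w⟫
      ((-1) ^ n * ⟪(A ^ (j + 1)) z, z⟫)]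
  · obtain ⟨n, rfl⟩ := Nat.exists_eq_add_of_le' hj
    have h := abs_inner_pow_succ_pow_le hA n k ((A ^ k) w)
    rw [← pow_add_apply, ← pow_add_apply, real_inner_comm, add_right_comm] at h
    have : 0 ≤ k * δ := by positivity
    linarith

theorem le_inner_pow_add_self_taylorSum (hA : ‖A‖ ≤ 1) (hk : Even k) (hδ0 : 0 ≤ δ)
    (hδ : ∀ i, ∀ j < k, |dissipationForm A ((A ^ i) ((A ^ k) w)) ((A ^ j) w)| ≤ δ)
    (n : ℕ) {t : ℝ} (ht : t ∈ Set.Icc (0 : ℝ) 1) :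
    (1 - n * ‖A‖) * ‖(A ^ k) w‖ ^ 2 - (n + 1) * (k * δ)
      ≤ ⟪(A ^ (k + k)) w, taylorSum (fun i => (A ^ i) w) (n + 1) t⟫ := by
  set N := ‖(A ^ k) w‖ ^ 2
  have hterm (j : ℕ) : -(‖A‖ * N + k * δ)
      ≤ t ^ (j + 1) / ((j + 1).factorial : ℝ) * ⟪(A ^ (k + k)) w, (A ^ (j + 1)) w⟫ := by
    have hinner := abs_inner_pow_add_self_pow_succ_le hA hδ0 hδ j
    refine (neg_le_neg ?_).trans (neg_abs_le _)
    rw [abs_mul, abs_of_nonneg (div_nonneg (pow_nonneg ht.1 _) (Nat.cast_nonneg _))]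
    exact (mul_le_of_le_one_left (abs_nonneg _)
      (pow_div_factorial_le_one ht (j + 1))).trans hinner
  have htail := Finset.card_nsmul_le_sum (Finset.range n) _ _ fun j _ => hterm j
  have hhead := norm_sq_sub_le_inner_pow_add_self hk hδ
  rw [Finset.card_range, nsmul_eq_mul] at htail
  have hexpand := map_taylorSum (innerₗ V ((A ^ (k + k)) w)) (fun i => (A ^ i) w) (n + 1) t
  simp only [innerₗ_apply_apply] at hexpand
  rw [hexpand, taylorSum, Finset.sum_range_succ']
  simp only [smul_eq_mul, pow_zero, Nat.factorial_zero, Nat.cast_one, div_one, one_mul,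
    one_apply_eq_self]
  linarith

end HalfwayPower

theorem hasDerivAt_taylorSum_pow (A : V →L[ℝ] V) (w : V) (r : ℕ) (t : ℝ) :
    HasDerivAt (taylorSum (fun i => (A ^ i) w) (r + 1))
      (A (taylorSum (fun i => (A ^ i) w) (r + 1) t)
        - (t ^ r / (r.factorial : ℝ)) • (A ^ (r + 1)) w) t := by
  refine (hasDerivAt_taylorSum _ r t).congr_deriv ?_
  have hshift : A (taylorSum (fun i => (A ^ i) w) (r + 1) t)
      = taylorSum (fun i => (A ^ (i + 1)) w) (r + 1) t := by
    simp only [pow_succ']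
    exact map_taylorSum A.toLinearMap _ _ t
  rw [hshift, taylorSum_succ, add_sub_cancel_right]

theorem hasDerivAt_norm_sq_taylorSum_pow (A : V →L[ℝ] V) (w : V) (r : ℕ) (t : ℝ) :
    HasDerivAt (fun s => ‖taylorSum (fun i => (A ^ i) w) (r + 1) s‖ ^ 2)
      (-dissipationForm A (taylorSum (fun i => (A ^ i) w) (r + 1) t)
          (taylorSum (fun i => (A ^ i) w) (r + 1) t)
        - 2 * (t ^ r / (r.factorial : ℝ))
          * ⟪(A ^ (r + 1)) w, taylorSum (fun i => (A ^ i) w) (r + 1) t⟫) t := by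
  refine (hasDerivAt_taylorSum_pow A w r t).norm_sq.congr_deriv ?_
  rw [dissipationForm_self, inner_sub_right, real_inner_smul_right, real_inner_comm,
    real_inner_comm ((A ^ (r + 1)) w)]
  ring

theorem norm_taylorSum_pow_le_of_forall_le_inner {r : ℕ} {w : V} (hneg : ∀ v, ⟪A v, v⟫ ≤ 0)
    (hdefect : ∀ t ∈ Set.Icc (0 : ℝ) 1,
      -(∫ s in (0 : ℝ)..1, dissipationForm A (taylorSum (fun i => (A ^ i) w) (r + 1) s)
        (taylorSum (fun i => (A ^ i) w) (r + 1) s)) / 2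
        ≤ ⟪(A ^ (r + 1)) w, taylorSum (fun i => (A ^ i) w) (r + 1) t⟫) :
    ‖taylorSum (fun i => (A ^ i) w) (r + 1) 1‖ ≤ ‖w‖ := by
  have hderiv := hasDerivAt_norm_sq_taylorSum_pow A w r
  have hzero : taylorSum (fun i => (A ^ i) w) (r + 1) 0 = w := by
    simp [taylorSum_succ_zero]
  set u := taylorSum (fun i => (A ^ i) w) (r + 1)
  set E := ∫ s in (0 : ℝ)..1, dissipationForm A (u s) (u s)
  have hE : 0 ≤ E := intervalIntegral.integral_nonneg zero_le_one fun t _ =>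
    (isPosSemidef_dissipationForm hneg).isNonneg.nonneg _
  have hcont : Continuous fun t => dissipationForm A (u t) (u t) :=
    continuous_bilinForm_taylorSum _ _ _
  have hrate : ∀ t ∈ Set.Ioo (0 : ℝ) 1,
      -dissipationForm A (u t) (u t) - 2 * (t ^ r / (r.factorial : ℝ)) * ⟪(A ^ (r + 1)) w, u t⟫
        ≤ E - dissipationForm A (u t) (u t) := fun t ht => by
    have hcoeff0 : 0 ≤ t ^ r / (r.factorial : ℝ) :=
      div_nonneg (pow_nonneg ht.1.le _) (Nat.cast_nonneg _)
    have hcoeff1 := pow_div_factorial_le_one (Set.Ioo_subset_Icc_self ht) r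
    nlinarith [mul_le_mul_of_nonneg_left (hdefect t (Set.Ioo_subset_Icc_self ht)) hcoeff0]
  have henergy : ‖u 1‖ ^ 2 - ‖u 0‖ ^ 2 ≤ ∫ t in (0 : ℝ)..1, (E - dissipationForm A (u t) (u t)) :=
    intervalIntegral.sub_le_integral_of_hasDeriv_right_of_le zero_le_one
      (fun t _ => (hderiv t).continuousAt.continuousWithinAt)
      (fun t _ => (hderiv t).hasDerivWithinAt)
      ((continuous_const.sub hcont).integrableOn_Icc) hrate
  rw [intervalIntegral.integral_sub intervalIntegrable_const (hcont.intervalIntegrable 0 1),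
    intervalIntegral.integral_const, hzero, sub_zero, one_smul, sub_self] at henergy
  exact le_of_sq_le_sq (sub_nonpos.1 henergy) (norm_nonneg w)

universe u

theorem exists_norm_taylorSum_pow_le {r k : ℕ} (hr : r + 1 = k + k) (hk : Even k) :
    ∃ μ₀ > (0 : ℝ), ∀ {V : Type u} [NormedAddCommGroup V] [InnerProductSpace ℝ V] {A : V →L[ℝ] V},
      (∀ v, ⟪A v, v⟫ ≤ 0) → ‖A‖ ≤ μ₀ → ∀ w,
        ‖taylorSum (fun i => (A ^ i) w) (r + 1) 1‖ ≤ ‖w‖ := by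
  obtain ⟨C, hC, hcoercive⟩ :=
    exists_forall_bilinForm_self_le_integral_taylorSum.{u} zero_lt_one (r + 1)
  have hkpos : (0 : ℝ) < k := by exact_mod_cast (by omega : 0 < k)
  refine ⟨(r + 4 * (k : ℝ) ^ 4 * C + 1)⁻¹, by positivity, fun {V} _ _ {A} hneg hA w => ?_⟩
  have hμ : (r + 4 * (k : ℝ) ^ 4 * C + 1) * ‖A‖ ≤ 1 := by
    rwa [← le_inv_mul_iff₀ (by positivity), mul_one]
  have hpos : 0 ≤ (r + 4 * (k : ℝ) ^ 4 * C) * ‖A‖ := by positivity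
  have hA1 : ‖A‖ ≤ 1 := by linarith
  refine norm_taylorSum_pow_le_of_forall_le_inner hneg fun t ht => ?_
  set E := ∫ s in (0 : ℝ)..1, dissipationForm A (taylorSum (fun i => (A ^ i) w) (r + 1) s)
    (taylorSum (fun i => (A ^ i) w) (r + 1) s)
  have hE : 0 ≤ E := intervalIntegral.integral_nonneg zero_le_one fun t _ =>
    (isPosSemidef_dissipationForm hneg).isNonneg.nonneg _
  set N := ‖(A ^ k) w‖ ^ 2
  -- This `θ` makes the `E`-part of the total error `(r + 1) k δ` equal to `E / 2`.
  set θ : ℝ := (2 * (k : ℝ) ^ 2 * C)⁻¹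
  set δ : ℝ := θ * (C * E) / 2 + θ⁻¹ * (‖A‖ * N)
  have hδ : ∀ i, ∀ j < k, |dissipationForm A ((A ^ i) ((A ^ k) w)) ((A ^ j) w)| ≤ δ :=
    fun i j hj => abs_dissipationForm_pow_apply_le hA1 hneg (by positivity)
      (hcoercive (isPosSemidef_dissipationForm hneg) (fun i => (A ^ i) w) j (by omega)) i
  have hlower := le_inner_pow_add_self_taylorSum hA1 hk (by positivity) hδ r ht
  have herror : (r + 1) * (k * δ) = E / 2 + 4 * (k : ℝ) ^ 4 * C * ‖A‖ * N := by
    have hrk : (r + 1 : ℝ) = k + k := by exact_mod_cast hr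
    simp only [hrk, δ, θ]
    field_simp
    ring
  have hN : 0 ≤ (1 - (r + 4 * (k : ℝ) ^ 4 * C) * ‖A‖) * N :=
    mul_nonneg (by linarith [norm_nonneg A]) (sq_nonneg _)
  rw [herror, ← hr] at hlower
  linarith

theorem rk_monotonicity_stability_mod_three_general (r : ℕ) (hmod : r % 4 = 3) :
    ∃ μ₀ > (0 : ℝ),
      ∀ (V : Type u) [NormedAddCommGroup V] [InnerProductSpace ℝ V] (L : V →L[ℝ] V),
        (∀ v : V, ⟪L v, v⟫ ≤ 0) →
        ∀ τ : ℝ, 0 ≤ τ → τ * ‖L‖ ≤ μ₀ →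
        ∀ w : V,
          ‖(∑ i ∈ Finset.range (r + 1), (1 / (i.factorial : ℝ)) • (τ • L) ^ i) w‖ ≤ ‖w‖ := by
  obtain ⟨μ₀, hμ₀, hstable⟩ := exists_norm_taylorSum_pow_le.{u} (r := r) (k := (r + 1) / 2)
    (by omega) (by rw [Nat.even_iff]; omega)
  refine ⟨μ₀, hμ₀, fun V _ _ L hneg τ hτ hτL w => ?_⟩
  have hA : ∀ v, ⟪(τ • L) v, v⟫ ≤ 0 := fun v => by
    rw [smul_apply, real_inner_smul_left]
    exact mul_nonpos_of_nonneg_of_nonpos hτ (hneg v)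
  have hnorm : ‖τ • L‖ ≤ μ₀ := by rwa [norm_smul, Real.norm_of_nonneg hτ]
  simpa [taylorSum] using hstable hA hnorm w

theorem inner_self_nonpos_of_inner_add_adjoint_nonpos {L Lstar : V →L[ℝ] V}
    (hadj : ∀ w v : V, ⟪L w, v⟫ = ⟪w, Lstar v⟫) (hneg : ∀ v : V, ⟪(L + Lstar) v, v⟫ ≤ 0) (v : V) :
    ⟪L v, v⟫ ≤ 0 := by
  have h := hneg v
  rw [add_apply, inner_add_left, real_inner_comm v (Lstar v), ← hadj] at h
  linarith

end Dissipation

/-- Monotonicity stability of the r-stage r-th order RK method for `r ≡ 3 (mod 4)`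
(Theorem 3.8, case 3): for a semi-negative `L` and `τ‖L‖ ≤ μ₀`, the operator
`R = ∑_{i=0}^r (1/i!)(τL)^i` satisfies `‖R w‖ ≤ ‖w‖`. -/
theorem rk_monotonicity_stability_mod_three (r : ℕ) (hr : 3 ≤ r) (hmod : r % 4 = 3) :
    ∃ μ₀ > (0 : ℝ),
      ∀ (V : Type) [NormedAddCommGroup V] [InnerProductSpace ℝ V] [FiniteDimensional ℝ V],
      ∀ L Lstar : V →L[ℝ] V,
        (∀ w v : V, ⟪L w, v⟫ = ⟪w, Lstar v⟫) →
        (∀ v : V, ⟪(L + Lstar) v, v⟫ ≤ 0) →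
        ∀ τ : ℝ, 0 < τ → τ * ‖L‖ ≤ μ₀ →
        ∀ w : V,
          ‖(∑ i ∈ Finset.range (r + 1), (1 / (i.factorial : ℝ)) • (τ • L) ^ i) w‖ ≤ ‖w‖ := by
  obtain ⟨μ₀, hμ₀, hstable⟩ := rk_monotonicity_stability_mod_three_general r hmod
  exact ⟨μ₀, hμ₀, fun V _ _ _ L _ hadj hneg τ hτ => hstable V L
    (inner_self_nonpos_of_inner_add_adjoint_nonpos hadj hneg) τ hτ.le⟩
end
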